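/- Let m ≥ 1 and let (i,j) ∈ {1,2,3} × {1,2,3}. If D is a domain on {1,…,m} such that every triple a < b < c of elements of {1,…,m} satisfies the same never condition iNj (no order of D, restricted to {a,b,c}, places the i-th smallest element of the triple in the j-th position from the top), then |D| ≤ 2^{m-1}. -/

import Mathlib

/-- `r` is a strict total order on `X`, supported on `X` (i.e. `r` never relates
elements outside `X`). -/
def IsLinearOrderOn {α : Type*} (X : Set α) (r : α → α → Prop) : Prop :=
  (∀ a b, r a b → a ∈ X ∧ b ∈ X) ∧
  (∀ a ∈ X, ¬ r a a) ∧
  (∀ a ∈ X, ∀ b ∈ X, ∀ c ∈ X, r a b → r b c → r a c) ∧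
  (∀ a ∈ X, ∀ b ∈ X, a ≠ b → r a b ∨ r b a)

/-- A domain on `X` is a set of linear orders on `X`. -/
def IsDomainOn {α : Type*} (X : Set α) (D : Set (α → α → Prop)) : Prop :=
  ∀ r ∈ D, IsLinearOrderOn X r

/-- The restriction of the order `r` to the subset `A`. -/
def restrictRel {α : Type*} (A : Set α) (r : α → α → Prop) : α → α → Prop :=
  fun a b => a ∈ A ∧ b ∈ A ∧ r a b

/-- The restriction of the domain `D` to the subset `A`: the set of linear orders
on `A` induced by the orders in `D`. -/
def restrictDom {α : Type*} (A : Set α) (D : Set (α → α → Prop)) :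
    Set (α → α → Prop) :=
  restrictRel A '' D

/-- `D` is `(k,s)`-abundant on `X`: its restriction to every `k`-element subset of `X`
contains at least `s` distinct linear orders. -/
def IsAbundant {α : Type*} (X : Set α) (D : Set (α → α → Prop)) (k s : ℕ) : Prop :=
  ∀ A : Set α, A ⊆ X → A.ncard = k → s ≤ (restrictDom A D).ncard

/-- `D` is exactly `(k,s)`-abundant: `(k,s)`-abundant but not `(k,s+1)`-abundant. -/
def IsExactlyAbundant {α : Type*} (X : Set α) (D : Set (α → α → Prop)) (k s : ℕ) : Prop :=
  IsAbundant X D k s ∧ ¬ IsAbundant X D k (s + 1)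

/-- The position (from the top, 1-based) of `x` within the triple `{a,b,c}` under the
order `r`: one plus the number of elements of the triple ranked above `x`. -/
noncomputable def posInTriple (r : ℕ → ℕ → Prop) (a b c x : ℕ) : ℕ :=
  1 + Set.ncard {y : ℕ | (y = a ∨ y = b ∨ y = c) ∧ r y x}

/-- The `i`-th smallest element of the triple `a < b < c`. -/
def tripleNth (a b c i : ℕ) : ℕ := if i = 1 then a else if i = 2 then b else c

/-- The never condition `iNj` holds for the triple `a < b < c` in the domain `D`:
no order of `D`, restricted to `{a,b,c}`, places the `i`-th smallest element of the
triple in the `j`-th position from the top. -/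
def NeverCondition (D : Set (ℕ → ℕ → Prop)) (a b c i j : ℕ) : Prop :=
  ∀ r ∈ D, posInTriple r a b c (tripleNth a b c i) ≠ j

/-!
The bound is proved by induction on the number of alternatives. It suffices to split the domain in
two parts and to find in each part an alternative whose removal is injective on it: each part then
embeds into a domain on one alternative fewer, which satisfies the same never condition.

For `i = 1` or `i = 3` that alternative is the smallest or the largest one, say `x`. If `x` is never
ranked first in a triple, then at most one alternative is ranked below `x`, so `x` is last or last
but one; if it is never second, it is first or last. For `i = 2`, let `l` and `u` be the two extreme
alternatives and split according to which of them is ranked higher. If no alternative is ranked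
above both `l` and `u`, then the higher of the two is first overall; if none is ranked between them,
then every other alternative compares with `u` as it does with `l`. The conditions with `j = 3` are
those with `j = 1` for the reversed orders.
-/

section Restriction

variable {α : Type*} {S T : Set α} {r : α → α → Prop} {D E : Set (α → α → Prop)} {a b c : α}

namespace IsLinearOrderOn

theorem irrefl (hr : IsLinearOrderOn S r) : ¬ r a a :=
  fun h => hr.2.1 a (hr.1 a a h).1 h

theorem trans (hr : IsLinearOrderOn S r) (hab : r a b) (hbc : r b c) : r a c :=
  hr.2.2.1 a (hr.1 a b hab).1 b (hr.1 a b hab).2 c (hr.1 b c hbc).2 hab hbc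

theorem asymm (hr : IsLinearOrderOn S r) (hab : r a b) : ¬ r b a :=
  fun hba => hr.irrefl (hr.trans hab hba)

theorem ne (hr : IsLinearOrderOn S r) (hab : r a b) : a ≠ b := by
  rintro rfl
  exact hr.irrefl hab

theorem rel_of_not_rel (hr : IsLinearOrderOn S r) (ha : a ∈ S) (hb : b ∈ S) (hab : a ≠ b)
    (h : ¬ r a b) : r b a :=
  (hr.2.2.2 a ha b hb hab).resolve_left h

theorem flip (hr : IsLinearOrderOn S r) : IsLinearOrderOn S (flip r) :=
  ⟨fun a b h => (hr.1 b a h).symm, hr.2.1, fun _ _ _ _ _ _ hab hbc => hr.trans hbc hab,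
    fun a ha b hb hab => (hr.2.2.2 a ha b hb hab).symm⟩

theorem restrictRel_eq_self (hr : IsLinearOrderOn S r) : restrictRel S r = r := by
  funext a b
  exact propext ⟨fun h => h.2.2, fun h => ⟨(hr.1 a b h).1, (hr.1 a b h).2, h⟩⟩

theorem restrictRel (hr : IsLinearOrderOn S r) (hT : T ⊆ S) :
    IsLinearOrderOn T (restrictRel T r) :=
  ⟨fun _ _ h => ⟨h.1, h.2.1⟩, fun _ _ h => hr.irrefl h.2.2,
    fun _ ha _ _ _ hc hab hbc => ⟨ha, hc, hr.trans hab.2.2 hbc.2.2⟩,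
    fun a ha b hb hab => (hr.2.2.2 a (hT ha) b (hT hb) hab).imp
      (fun h => ⟨ha, hb, h⟩) (fun h => ⟨hb, ha, h⟩)⟩

end IsLinearOrderOn

theorem restrictRel_restrictRel (hT : T ⊆ S) (r : α → α → Prop) :
    restrictRel T (restrictRel S r) = restrictRel T r := by
  funext a b
  exact propext ⟨fun h => ⟨h.1, h.2.1, h.2.2.2.2⟩, fun h => ⟨h.1, h.2.1, hT h.1, hT h.2.1, h.2.2⟩⟩

theorem restrictDom_restrictDom (hT : T ⊆ S) (D : Set (α → α → Prop)) :
    restrictDom T (restrictDom S D) = restrictDom T D := by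
  simp only [restrictDom, Set.image_image, restrictRel_restrictRel hT]

theorem restrictDom_mono (T : Set α) (h : E ⊆ D) : restrictDom T E ⊆ restrictDom T D :=
  Set.image_mono h

namespace IsDomainOn

theorem mono (hD : IsDomainOn S D) (h : E ⊆ D) : IsDomainOn S E :=
  fun r hr => hD r (h hr)

theorem restrictDom (hD : IsDomainOn S D) (hT : T ⊆ S) : IsDomainOn T (restrictDom T D) := by
  rintro _ ⟨r, hr, rfl⟩
  exact (hD r hr).restrictRel hT

theorem restrictDom_eq_self (hD : IsDomainOn S D) : _root_.restrictDom S D = D :=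
  (Set.image_congr fun r hr => (hD r hr).restrictRel_eq_self).trans (Set.image_id' D)

theorem image_flip (hD : IsDomainOn S D) : IsDomainOn S (flip '' D) := by
  rintro _ ⟨r, hr, rfl⟩
  exact (hD r hr).flip

theorem subsingleton_of_singleton (hD : IsDomainOn {a} D) : D.Subsingleton := by
  have not_rel : ∀ r ∈ D, ∀ b c, ¬ r b c := fun r hr b c hbc =>
    (hD r hr).ne hbc (((hD r hr).1 b c hbc).1.trans ((hD r hr).1 b c hbc).2.symm)
  intro r hr r' hr'
  funext b c
  exact propext (iff_of_false (not_rel r hr b c) (not_rel r' hr' b c))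

end IsDomainOn

end Restriction

section Peeling

variable {α : Type*} {S : Set α} {D E : Set (α → α → Prop)} {x : α}

/-- The orders in `E` are determined by their restrictions to `S \ {x}`. -/
def DeterminedWithout (S : Set α) (x : α) (E : Set (α → α → Prop)) : Prop :=
  Set.InjOn (restrictRel (S \ {x})) E

/-- `D` is covered by two sets of orders, each determined by what is left after removing one
alternative, so passing to one alternative fewer at worst halves the number of orders. The removed
alternatives may differ between the two sets. -/
def HasBinaryPeeling (S : Set α) (D : Set (α → α → Prop)) : Prop :=
  ∃ x ∈ S, ∃ y ∈ S, ∃ E F : Set (α → α → Prop),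
    D ⊆ E ∪ F ∧ DeterminedWithout S x E ∧ DeterminedWithout S y F

theorem HasBinaryPeeling.mono (hD : HasBinaryPeeling S D) (h : E ⊆ D) : HasBinaryPeeling S E := by
  obtain ⟨x, hx, y, hy, F, G, hDFG, hF, hG⟩ := hD
  exact ⟨x, hx, y, hy, F, G, h.trans hDFG, hF, hG⟩

theorem hasBinaryPeeling_of_sep {y : α} (p : (α → α → Prop) → Prop) (hx : x ∈ S) (hy : y ∈ S)
    (hp : DeterminedWithout S x {r ∈ D | p r}) (hnp : DeterminedWithout S y {r ∈ D | ¬ p r}) :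
    HasBinaryPeeling S D :=
  ⟨x, hx, y, hy, _, _, fun r hr => (em (p r)).imp (And.intro hr) (And.intro hr), hp, hnp⟩

theorem DeterminedWithout.image_flip (hE : DeterminedWithout S x E) :
    DeterminedWithout S x (flip '' E) := by
  rintro _ ⟨r, hr, rfl⟩ _ ⟨r', hr', rfl⟩ heq
  refine congrArg flip (hE hr hr' ?_)
  funext a b
  simpa only [restrictRel, flip, and_left_comm] using congrFun (congrFun heq b) a

theorem HasBinaryPeeling.of_image_flip (hD : HasBinaryPeeling S (flip '' D)) :
    HasBinaryPeeling S D := by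
  obtain ⟨x, hx, y, hy, E, F, hDEF, hE, hF⟩ := hD
  refine ⟨x, hx, y, hy, flip '' E, flip '' F, ?_, hE.image_flip, hF.image_flip⟩
  intro r hr
  rw [← Set.image_union]
  exact ⟨flip r, hDEF ⟨r, hr, rfl⟩, rfl⟩

theorem encard_le_two_pow_of_forall_hasBinaryPeeling {n : ℕ} (hS : S.ncard = n + 1)
    (hD : IsDomainOn S D)
    (h : ∀ T ⊆ S, T.Nontrivial → HasBinaryPeeling T (restrictDom T D)) :
    D.encard ≤ 2 ^ n := by
  induction n generalizing S D with
  | zero =>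
    obtain ⟨a, rfl⟩ := Set.ncard_eq_one.mp hS
    simpa using Set.encard_le_one_iff_subsingleton.mpr hD.subsingleton_of_singleton
  | succ n ih =>
    have part_le : ∀ x ∈ S, ∀ E, DeterminedWithout S x E → (D ∩ E).encard ≤ 2 ^ n := by
      intro x hx E hE
      rw [← (hE.mono Set.inter_subset_right).encard_image]
      refine ih (by rw [Set.ncard_sdiff_singleton_of_mem hx, hS]; rfl)
        ((hD.mono Set.inter_subset_left).restrictDom Set.sdiff_subset) fun T hT hT' => ?_
      refine (h T (hT.trans Set.sdiff_subset) hT').mono ?_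
      exact (restrictDom_restrictDom hT _).subset.trans (restrictDom_mono T Set.inter_subset_left)
    have hpeel := h S subset_rfl (Set.one_lt_ncard_iff_nontrivial_and_finite.mp (by omega)).1
    rw [hD.restrictDom_eq_self] at hpeel
    obtain ⟨x, hx, y, hy, E, F, hDEF, hE, hF⟩ := hpeel
    calc D.encard = (D ∩ E ∪ D ∩ F).encard := by
          rw [← Set.inter_union_distrib_left, Set.inter_eq_left.mpr hDEF]
      _ ≤ (D ∩ E).encard + (D ∩ F).encard := Set.encard_union_le _ _
      _ ≤ 2 ^ n + 2 ^ n := add_le_add (part_le x hx E hE) (part_le y hy F hF)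
      _ = 2 ^ (n + 1) := by rw [pow_succ, mul_two]

end Peeling

section PeelingCriteria

variable {α : Type*} {S : Set α} {D E : Set (α → α → Prop)} {x l u : α}

theorem rel_iff_of_restrictRel_sdiff_singleton_eq {r r' : α → α → Prop} {a b : α}
    (heq : restrictRel (S \ {x}) r = restrictRel (S \ {x}) r')
    (ha : a ∈ S) (hb : b ∈ S) (hax : a ≠ x) (hbx : b ≠ x) : r a b ↔ r' a b := by
  simpa [restrictRel, ha, hb, hax, hbx] using congrFun (congrFun heq a) b

theorem determinedWithout_of_forall_rel (hE : IsDomainOn S E) (hx : x ∈ S)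
    (h : ∀ r ∈ E, ∀ r' ∈ E, restrictRel (S \ {x}) r = restrictRel (S \ {x}) r' →
      ∀ y, r y x → r' y x) :
    DeterminedWithout S x E := by
  have rel_imp : ∀ r ∈ E, ∀ r' ∈ E, restrictRel (S \ {x}) r = restrictRel (S \ {x}) r' →
      ∀ a b, r a b → r' a b := by
    intro r hr r' hr' heq a b hab
    obtain ⟨ha, hb⟩ := (hE r hr).1 a b hab
    rcases eq_or_ne b x with rfl | hbx
    · exact h r hr r' hr' heq a hab
    rcases eq_or_ne a x with rfl | hax
    · exact (hE r' hr').rel_of_not_rel hb ha hbx fun hba =>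
        (hE r hr).asymm hab (h r' hr' r hr heq.symm b hba)
    · exact (rel_iff_of_restrictRel_sdiff_singleton_eq heq ha hb hax hbx).mp hab
  intro r hr r' hr' heq
  funext a b
  exact propext ⟨rel_imp r hr r' hr' heq a b, rel_imp r' hr' r hr heq.symm a b⟩

theorem determinedWithout_of_forall_first (hE : IsDomainOn S E) (hx : x ∈ S)
    (h : ∀ r ∈ E, ∀ y, ¬ r y x) : DeterminedWithout S x E :=
  determinedWithout_of_forall_rel hE hx fun r hr _ _ _ y hyx => absurd hyx (h r hr y)

theorem determinedWithout_of_forall_last (hE : IsDomainOn S E) (hx : x ∈ S)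
    (h : ∀ r ∈ E, ∀ y, ¬ r x y) : DeterminedWithout S x E :=
  determinedWithout_of_forall_rel hE hx fun r hr r' hr' _ y hyx =>
    (hE r' hr').rel_of_not_rel hx ((hE r hr).1 y x hyx).1 ((hE r hr).ne hyx).symm (h r' hr' y)

theorem hasBinaryPeeling_of_unique_below (hD : IsDomainOn S D) (hx : x ∈ S)
    (h : ∀ r ∈ D, ∀ y z, r x y → r x z → y = z) : HasBinaryPeeling S D := by
  refine hasBinaryPeeling_of_sep (fun r => ∃ t, r x t) hx hx ?_ ?_
  · refine determinedWithout_of_forall_rel (hD.mono (Set.sep_subset D _)) hx ?_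
    rintro r ⟨hr, t, hxt⟩ r' ⟨hr', -⟩ heq y hyx
    have hlin := hD r hr
    have hlin' := hD r' hr'
    have hyt : r y t := hlin.trans hyx hxt
    obtain ⟨hyS, htS⟩ := hlin.1 y t hyt
    have hyt' : r' y t := (rel_iff_of_restrictRel_sdiff_singleton_eq heq hyS htS
      (hlin.ne hyx) (hlin.ne hxt).symm).mp hyt
    refine hlin'.rel_of_not_rel hx hyS (hlin.ne hyx).symm fun hxy' => ?_
    exact hlin'.ne hyt' (h r' hr' y t hxy' (hlin'.trans hxy' hyt'))
  · exact determinedWithout_of_forall_last (hD.mono (Set.sep_subset D _)) hx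
      fun r hr t hxt => hr.2 ⟨t, hxt⟩

theorem hasBinaryPeeling_of_unique_above (hD : IsDomainOn S D) (hx : x ∈ S)
    (h : ∀ r ∈ D, ∀ y z, r y x → r z x → y = z) : HasBinaryPeeling S D :=
  (hasBinaryPeeling_of_unique_below hD.image_flip hx (Set.forall_mem_image.mpr h)).of_image_flip

theorem hasBinaryPeeling_of_first_or_last (hD : IsDomainOn S D) (hx : x ∈ S)
    (h : ∀ r ∈ D, ∀ y z, r y x → ¬ r x z) : HasBinaryPeeling S D := by
  refine hasBinaryPeeling_of_sep (fun r => ∃ y, r y x) hx hx ?_ ?_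
  · exact determinedWithout_of_forall_last (hD.mono (Set.sep_subset D _)) hx
      fun r ⟨hr, y, hyx⟩ z => h r hr y z hyx
  · exact determinedWithout_of_forall_first (hD.mono (Set.sep_subset D _)) hx
      fun r hr y hyx => hr.2 ⟨y, hyx⟩

theorem hasBinaryPeeling_of_not_above_both (hD : IsDomainOn S D) (hl : l ∈ S) (hu : u ∈ S)
    (hlu : l ≠ u) (h : ∀ r ∈ D, ∀ y, r y l → ¬ r y u) : HasBinaryPeeling S D := by
  refine hasBinaryPeeling_of_sep (fun r => r l u) hl hu ?_ ?_
  · exact determinedWithout_of_forall_first (hD.mono (Set.sep_subset D _)) hl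
      fun r ⟨hr, hlu_rel⟩ y hyl => h r hr y hyl ((hD r hr).trans hyl hlu_rel)
  · refine determinedWithout_of_forall_first (hD.mono (Set.sep_subset D _)) hu ?_
    rintro r ⟨hr, hlu_rel⟩ y hyu
    have hul_rel : r u l := (hD r hr).rel_of_not_rel hl hu hlu hlu_rel
    exact h r hr y ((hD r hr).trans hyu hul_rel) hyu

theorem hasBinaryPeeling_of_not_below_both (hD : IsDomainOn S D) (hl : l ∈ S) (hu : u ∈ S)
    (hlu : l ≠ u) (h : ∀ r ∈ D, ∀ y, r l y → ¬ r u y) : HasBinaryPeeling S D :=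
  (hasBinaryPeeling_of_not_above_both hD.image_flip hl hu hlu
    (Set.forall_mem_image.mpr h)).of_image_flip

theorem hasBinaryPeeling_of_above_iff_above (hD : IsDomainOn S D) (hl : l ∈ S) (hu : u ∈ S)
    (hlu : l ≠ u) (h : ∀ r ∈ D, ∀ y ∈ S, y ≠ l → y ≠ u → (r y l ↔ r y u)) :
    HasBinaryPeeling S D := by
  have determined : ∀ E ⊆ D, (∀ r ∈ E, ∀ r' ∈ E, r l u → r' l u) → DeterminedWithout S u E := by
    intro E hE agree
    refine determinedWithout_of_forall_rel (hD.mono hE) hu fun r hr r' hr' heq y hyu => ?_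
    rcases eq_or_ne y l with rfl | hyl
    · exact agree r hr r' hr' hyu
    have hyS : y ∈ S := ((hD r (hE hr)).1 y u hyu).1
    have hyu_ne : y ≠ u := (hD r (hE hr)).ne hyu
    rwa [← h r' (hE hr') y hyS hyl hyu_ne,
      ← rel_iff_of_restrictRel_sdiff_singleton_eq heq hyS hl hyu_ne hlu,
      h r (hE hr) y hyS hyl hyu_ne]
  refine hasBinaryPeeling_of_sep (fun r => r l u) hu hu ?_ ?_
  · exact determined _ (Set.sep_subset D _) fun r _ r' hr' _ => hr'.2
  · exact determined _ (Set.sep_subset D _) fun r hr r' _ hlu_rel => absurd hlu_rel hr.2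

end PeelingCriteria

section Position

variable {α : Type*} {S A : Set α} {r : α → α → Prop} {x y z : α}

/-- The position of `x` in `A` from the top, counted from `1`, under the order `r`: `posInTriple`
for an arbitrary set of alternatives of any type. -/
noncomputable def positionIn (r : α → α → Prop) (A : Set α) (x : α) : ℕ :=
  1 + {y | y ∈ A ∧ r y x}.ncard

theorem positionIn_restrictRel (hA : A ⊆ S) (hx : x ∈ S) :
    positionIn (restrictRel S r) A x = positionIn r A x := by
  have above_eq : {y | y ∈ A ∧ restrictRel S r y x} = {y | y ∈ A ∧ r y x} :=
    Set.ext fun y => and_congr_right fun hy => ⟨fun h => h.2.2, fun h => ⟨hA hy, hx, h⟩⟩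
  rw [positionIn, positionIn, above_eq]

theorem positionIn_eq_one (hr : IsLinearOrderOn S r) (hxy : r x y) (hxz : r x z) :
    positionIn r {x, y, z} x = 1 := by
  have above_eq : {w | w ∈ ({x, y, z} : Set α) ∧ r w x} = ∅ := by
    ext w
    simp only [Set.mem_insert_iff, Set.mem_singleton_iff, Set.mem_ofPred_eq]
    grind [hr.irrefl (a := x), hr.asymm hxy, hr.asymm hxz]
  rw [positionIn, above_eq, Set.ncard_empty]

theorem positionIn_eq_two (hr : IsLinearOrderOn S r) (hyx : r y x) (hxz : r x z) :
    positionIn r {x, y, z} x = 2 := by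
  have above_eq : {w | w ∈ ({x, y, z} : Set α) ∧ r w x} = {y} := by
    ext w
    simp only [Set.mem_insert_iff, Set.mem_singleton_iff, Set.mem_ofPred_eq]
    grind [hr.irrefl (a := x), hr.asymm hxz]
  rw [positionIn, above_eq, Set.ncard_singleton]

theorem positionIn_eq_three (hr : IsLinearOrderOn S r) (hyz : y ≠ z) (hyx : r y x) (hzx : r z x) :
    positionIn r {x, y, z} x = 3 := by
  have above_eq : {w | w ∈ ({x, y, z} : Set α) ∧ r w x} = {y, z} := by
    ext w
    simp only [Set.mem_insert_iff, Set.mem_singleton_iff, Set.mem_ofPred_eq]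
    grind [hr.irrefl (a := x)]
  rw [positionIn, above_eq, Set.ncard_pair hyz]

end Position

section UniformNever

variable {α : Type*} {S T : Set α} {D : Set (α → α → Prop)} {x l u : α} {j : ℕ}

theorem hasBinaryPeeling_of_positionIn_ne (hD : IsDomainOn S D) (hx : x ∈ S)
    (hj : j ∈ ({1, 2, 3} : Set ℕ))
    (h : ∀ r ∈ D, ∀ y ∈ S, ∀ z ∈ S, y ≠ x → z ≠ x → y ≠ z → positionIn r {x, y, z} x ≠ j) :
    HasBinaryPeeling S D := by
  rcases hj with rfl | rfl | rfl
  · refine hasBinaryPeeling_of_unique_below hD hx fun r hr y z hxy hxz => ?_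
    have hlin := hD r hr
    by_contra hyz
    exact h r hr y (hlin.1 x y hxy).2 z (hlin.1 x z hxz).2 (hlin.ne hxy).symm (hlin.ne hxz).symm
      hyz (positionIn_eq_one hlin hxy hxz)
  · refine hasBinaryPeeling_of_first_or_last hD hx fun r hr y z hyx hxz => ?_
    have hlin := hD r hr
    exact h r hr y (hlin.1 y x hyx).1 z (hlin.1 x z hxz).2 (hlin.ne hyx) (hlin.ne hxz).symm
      (hlin.ne (hlin.trans hyx hxz)) (positionIn_eq_two hlin hyx hxz)
  · refine hasBinaryPeeling_of_unique_above hD hx fun r hr y z hyx hzx => ?_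
    have hlin := hD r hr
    by_contra hyz
    exact h r hr y (hlin.1 y x hyx).1 z (hlin.1 z x hzx).1 (hlin.ne hyx) (hlin.ne hzx)
      hyz (positionIn_eq_three hlin hyz hyx hzx)

theorem hasBinaryPeeling_of_positionIn_pair_ne (hD : IsDomainOn S D) (hl : l ∈ S) (hu : u ∈ S)
    (hlu : l ≠ u) (hj : j ∈ ({1, 2, 3} : Set ℕ))
    (h : ∀ r ∈ D, ∀ y ∈ S, y ≠ l → y ≠ u → positionIn r {y, l, u} y ≠ j) :
    HasBinaryPeeling S D := by
  rcases hj with rfl | rfl | rfl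
  · refine hasBinaryPeeling_of_not_above_both hD hl hu hlu fun r hr y hyl hyu => ?_
    have hlin := hD r hr
    exact h r hr y (hlin.1 y l hyl).1 (hlin.ne hyl) (hlin.ne hyu) (positionIn_eq_one hlin hyl hyu)
  · refine hasBinaryPeeling_of_above_iff_above hD hl hu hlu fun r hr y hy hyl hyu => ?_
    have hlin := hD r hr
    have hne := h r hr y hy hyl hyu
    constructor <;> intro hrel <;> by_contra hnrel
    · refine hne ?_
      rw [Set.pair_comm]
      exact positionIn_eq_two hlin (hlin.rel_of_not_rel hy hu hyu hnrel) hrel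
    · exact hne (positionIn_eq_two hlin (hlin.rel_of_not_rel hy hl hyl hnrel) hrel)
  · refine hasBinaryPeeling_of_not_below_both hD hl hu hlu fun r hr y hly huy => ?_
    have hlin := hD r hr
    exact h r hr y (hlin.1 l y hly).2 (hlin.ne hly).symm (hlin.ne huy).symm
      (positionIn_eq_three hlin hlu hly huy)

variable [LinearOrder α] {i : Fin 3}

/-- Every triple of `S` satisfies the same never condition in `D`, for alternatives of any linearly
ordered type. The index `i` counts from `0`, the position `j` from `1`, so this is the paper's
`(i+1)Nj`. -/
def UniformNever (S : Set α) (D : Set (α → α → Prop)) (i : Fin 3) (j : ℕ) : Prop :=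
  ∀ r ∈ D, ∀ a ∈ S, ∀ b ∈ S, ∀ c ∈ S, a < b → b < c → positionIn r {a, b, c} (![a, b, c] i) ≠ j

namespace UniformNever

theorem restrictDom (h : UniformNever S D i j) (hT : T ⊆ S) :
    UniformNever T (restrictDom T D) i j := by
  rintro _ ⟨r, hr, rfl⟩ a ha b hb c hc hab hbc
  have nth_mem : ![a, b, c] i ∈ T := by fin_cases i <;> assumption
  rw [positionIn_restrictRel (by grind) nth_mem]
  exact h r hr a (hT ha) b (hT hb) c (hT hc) hab hbc

theorem positionIn_isLeast_ne (h : UniformNever S D 0 j) (hl : IsLeast S l) :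
    ∀ r ∈ D, ∀ y ∈ S, ∀ z ∈ S, y ≠ l → z ≠ l → y ≠ z → positionIn r {l, y, z} l ≠ j := by
  intro r hr y hy z hz hyl hzl hyz
  rcases hyz.lt_or_gt with hlt | hgt
  · exact h r hr l hl.1 y hy z hz ((hl.2 hy).lt_of_ne hyl.symm) hlt
  · rw [Set.pair_comm]
    exact h r hr l hl.1 z hz y hy ((hl.2 hz).lt_of_ne hzl.symm) hgt

theorem positionIn_isGreatest_ne (h : UniformNever S D 2 j) (hu : IsGreatest S u) :
    ∀ r ∈ D, ∀ y ∈ S, ∀ z ∈ S, y ≠ u → z ≠ u → y ≠ z → positionIn r {u, y, z} u ≠ j := by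
  intro r hr y hy z hz hyu hzu hyz
  rw [Set.insert_comm, Set.pair_comm]
  rcases hyz.lt_or_gt with hlt | hgt
  · exact h r hr y hy z hz u hu.1 hlt ((hu.2 hz).lt_of_ne hzu)
  · rw [Set.insert_comm]
    exact h r hr z hz y hy u hu.1 hgt ((hu.2 hy).lt_of_ne hyu)

theorem positionIn_between_ne (h : UniformNever S D 1 j) (hl : IsLeast S l)
    (hu : IsGreatest S u) :
    ∀ r ∈ D, ∀ y ∈ S, y ≠ l → y ≠ u → positionIn r {y, l, u} y ≠ j := by
  intro r hr y hy hyl hyu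
  rw [Set.insert_comm]
  exact h r hr l hl.1 y hy u hu.1 ((hl.2 hy).lt_of_ne hyl.symm) ((hu.2 hy).lt_of_ne hyu)

theorem hasBinaryPeeling (h : UniformNever S D i j) (hD : IsDomainOn S D) (hfin : S.Finite)
    (hS : S.Nontrivial) (hj : j ∈ ({1, 2, 3} : Set ℕ)) : HasBinaryPeeling S D := by
  obtain ⟨l, hl⟩ : ∃ l, IsLeast S l := Set.exists_min_image S id hfin hS.nonempty
  obtain ⟨u, hu⟩ : ∃ u, IsGreatest S u := Set.exists_max_image S id hfin hS.nonempty
  fin_cases i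
  · exact hasBinaryPeeling_of_positionIn_ne hD hl.1 hj (h.positionIn_isLeast_ne hl)
  · have hlu : l ≠ u := by
      rintro rfl
      exact hS.not_subsingleton fun a ha b hb =>
        ((hu.2 ha).antisymm (hl.2 ha)).trans ((hl.2 hb).antisymm (hu.2 hb))
    exact hasBinaryPeeling_of_positionIn_pair_ne hD hl.1 hu.1 hlu hj
      (h.positionIn_between_ne hl hu)
  · exact hasBinaryPeeling_of_positionIn_ne hD hu.1 hj (h.positionIn_isGreatest_ne hu)

end UniformNever

end UniformNever

theorem single_never_condition_card_bound_general {α : Type*} [LinearOrder α] {S : Set α} {n : ℕ}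
    (hS : S.ncard = n + 1) {i : Fin 3} {j : ℕ} (hj : j ∈ ({1, 2, 3} : Set ℕ))
    {D : Set (α → α → Prop)} (hD : IsDomainOn S D) (h : UniformNever S D i j) :
    D.encard ≤ 2 ^ n := by
  have hfin : S.Finite := Set.finite_of_ncard_pos (by omega)
  exact encard_le_two_pow_of_forall_hasBinaryPeeling hS hD fun T hT hT' =>
    (h.restrictDom hT).hasBinaryPeeling (hD.restrictDom hT) (hfin.subset hT) hT' hj

theorem exists_fin_tripleNth_eq {i : ℕ} (hi : i ∈ ({1, 2, 3} : Set ℕ)) :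
    ∃ k : Fin 3, ∀ a b c : ℕ, tripleNth a b c i = ![a, b, c] k := by
  rcases hi with rfl | rfl | rfl
  exacts [⟨0, fun _ _ _ => rfl⟩, ⟨1, fun _ _ _ => rfl⟩, ⟨2, fun _ _ _ => rfl⟩]

theorem exists_uniformNever_of_neverCondition {S : Set ℕ} {D : Set (ℕ → ℕ → Prop)} {i j : ℕ}
    (hi : i ∈ ({1, 2, 3} : Set ℕ))
    (h : ∀ a ∈ S, ∀ b ∈ S, ∀ c ∈ S, a < b → b < c → NeverCondition D a b c i j) :
    ∃ k : Fin 3, UniformNever S D k j := by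
  obtain ⟨k, hk⟩ := exists_fin_tripleNth_eq hi
  exact ⟨k, fun r hr a ha b hb c hc hab hbc => hk a b c ▸ h a ha b hb c hc hab hbc r hr⟩

/-- If every triple `a < b < c` of `{1,…,m}` satisfies the same never condition `iNj`
in the domain `D` on `{1,…,m}`, then `D` has at most `2^(m-1)` orders. -/
theorem single_never_condition_card_bound (m : ℕ) (hm : 1 ≤ m)
    (i j : ℕ) (hi : i ∈ ({1, 2, 3} : Set ℕ)) (hj : j ∈ ({1, 2, 3} : Set ℕ))
    (D : Set (ℕ → ℕ → Prop)) (hD : IsDomainOn (Set.Icc 1 m) D)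
    (h : ∀ a ∈ Set.Icc 1 m, ∀ b ∈ Set.Icc 1 m, ∀ c ∈ Set.Icc 1 m,
      a < b → b < c → NeverCondition D a b c i j) :
    D.ncard ≤ 2 ^ (m - 1) := by
  obtain ⟨k, hnever⟩ := exists_uniformNever_of_neverCondition hi h
  have hcard : (Set.Icc 1 m).ncard = m - 1 + 1 := by simp [Set.ncard_eq_toFinset_card', hm]
  exact ENat.toNat_le_of_le_natCast
    (by exact_mod_cast single_never_condition_card_bound_general hcard hj hD hnever)
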